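/- Let G be a 2-regular digraph on a finite vertex type V with n ≥ 1 elements. Then equality 4·∑_{σ ∈ C(G)} c(σ) = 3n·|C(G)| holds if and only if there is a fixed-point-free involution τ : V → V such that for all u, v ∈ V one has G u v ↔ (v = u ∨ v = τ u); in that case n is even and G is isomorphic to the disjoint union of n/2 copies of the complete looped digraph K_2° on two vertices. -/

import Mathlib

/-!
Write `fix σ` for the number of fixed points of `σ`, `n` for the number of vertices and `L` for the
number of loops of `G`. Every cycle that is not a fixed point has length at least two, so
`2 c(σ) ≤ n + fix σ`, with equality exactly when `σ` is an involution
(`two_mul_cycleCount_le`, `two_mul_cycleCount_eq_iff`).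

In a 2-regular digraph each cycle-factor `σ` has a complement `σ'`, which sends each vertex to its
other out-neighbour; since in-degrees are also two, `σ'` is again a permutation
(`exists_complement`). Each loop is used by exactly one of `σ` and `σ'`, so
`fix σ + fix σ' = L`, and summing over the involution `σ ↦ σ'` of `C(G)` gives
`2 ∑ fix σ = L |C(G)|` (`two_mul_sum_fix`). Hence
`4 ∑ c(σ) ≤ 2 n |C(G)| + 2 ∑ fix σ = (2 n + L) |C(G)| ≤ 3 n |C(G)|`.

By Hall's theorem `C(G)` is nonempty (`cycleFactors_nonempty`), so equality forces `L = n` and every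
cycle-factor to be an involution. Then the identity is a cycle-factor, and its complement is the
required `τ`. Conversely, for `G` of the given form every cycle-factor is an involution and `L = n`,
so equality holds throughout.
-/

/-- The number of cycles of a permutation of a finite type, where fixed
points count as cycles of length one. -/
def cycleCount {V : Type*} [Fintype V] [DecidableEq V] (σ : Equiv.Perm V) : ℕ :=
  σ.cycleType.card + (Finset.univ.filter fun x => σ x = x).card

/-- The finite set of cycle-factors of a digraph `G` on `V`. -/
def cycleFactors {V : Type*} [Fintype V] [DecidableEq V] (G : V → V → Prop) [DecidableRel G] :
    Finset (Equiv.Perm V) :=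
  Finset.univ.filter fun σ => ∀ v, G v (σ v)

/-- A digraph is `d`-regular if every vertex has exactly `d` out-neighbours
and exactly `d` in-neighbours. -/
def IsRegularDigraph {V : Type*} [Fintype V] (G : V → V → Prop) [DecidableRel G] (d : ℕ) : Prop :=
  ∀ v, (Finset.univ.filter fun w => G v w).card = d ∧
    (Finset.univ.filter fun w => G w v).card = d

/-- The number of fixed points of a permutation. -/
def fixCount {V : Type*} [Fintype V] [DecidableEq V] (σ : Equiv.Perm V) : ℕ :=
  (Finset.univ.filter fun x => σ x = x).card

/-- The number of loops of a digraph. -/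
def loopCount {V : Type*} [Fintype V] (G : V → V → Prop) [DecidableRel G] : ℕ :=
  (Finset.univ.filter fun v => G v v).card

section

variable {V : Type*} [Fintype V] [DecidableEq V]

theorem sum_cycleType_add_fixCount (σ : Equiv.Perm V) :
    σ.cycleType.sum + fixCount σ = Fintype.card V := by
  rw [Equiv.Perm.sum_cycleType, fixCount, ← Finset.card_univ,
    ← Finset.card_filter_add_card_filter_not (s := Finset.univ) (fun x => σ x = x), add_comm]
  congr 2

theorem two_mul_cycleCount_le (σ : Equiv.Perm V) :
    2 * cycleCount σ ≤ Fintype.card V + fixCount σ := by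
  have h := sum_cycleType_add_fixCount σ
  have h2 : σ.cycleType.card • 2 ≤ σ.cycleType.sum :=
    Multiset.card_nsmul_le_sum fun x hx => Equiv.Perm.two_le_of_mem_cycleType hx
  have h3 : cycleCount σ = σ.cycleType.card + fixCount σ := rfl
  rw [smul_eq_mul] at h2
  omega

theorem Multiset.eq_two_of_sum_eq (s : Multiset ℕ) (hs : ∀ x ∈ s, 2 ≤ x)
    (h : s.sum = 2 * s.card) : ∀ x ∈ s, x = 2 := by
  intro x hx
  obtain ⟨t, rfl⟩ := Multiset.exists_cons_of_mem hx
  have ht : t.card • 2 ≤ t.sum :=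
    Multiset.card_nsmul_le_sum fun y hy => hs y (Multiset.mem_cons_of_mem hy)
  have := hs x hx
  simp only [Multiset.sum_cons, Multiset.card_cons, smul_eq_mul] at h ht
  omega

theorem two_mul_cycleCount_eq_iff (σ : Equiv.Perm V) :
    2 * cycleCount σ = Fintype.card V + fixCount σ ↔ ∀ v, σ (σ v) = v := by
  have h := sum_cycleType_add_fixCount σ
  have h3 : cycleCount σ = σ.cycleType.card + fixCount σ := rfl
  have hsq : (∀ v, σ (σ v) = v) ↔ orderOf σ ∣ 2 := by
    rw [orderOf_dvd_iff_pow_eq_one, Equiv.ext_iff]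
    simp [pow_two]
  rw [hsq]
  constructor
  · intro he
    rw [← Equiv.Perm.lcm_cycleType, Multiset.lcm_dvd]
    intro x hx
    rw [Multiset.eq_two_of_sum_eq σ.cycleType
      (fun x hx => Equiv.Perm.two_le_of_mem_cycleType hx) (by omega) x hx]
  · intro ho
    have h2 : ∀ x ∈ σ.cycleType, x = 2 := fun x hx =>
      le_antisymm (Nat.le_of_dvd two_pos ((Equiv.Perm.dvd_of_mem_cycleType hx).trans ho))
        (Equiv.Perm.two_le_of_mem_cycleType hx)
    have h4 : σ.cycleType.sum = σ.cycleType.card * 2 := by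
      conv_lhs => rw [Multiset.eq_replicate_card.2 h2]
      simp
    omega

variable {G : V → V → Prop} [DecidableRel G]

theorem mem_cycleFactors {σ : Equiv.Perm V} : σ ∈ cycleFactors G ↔ ∀ v, G v (σ v) := by
  simp [cycleFactors]

/-- Every cycle-factor has a complement, which uses exactly the edges the cycle-factor omits. -/
theorem exists_complement (hreg : IsRegularDigraph G 2) {σ : Equiv.Perm V}
    (hσ : σ ∈ cycleFactors G) :
    ∃ σ' : Equiv.Perm V, (∀ v, σ' v ≠ σ v) ∧ ∀ v w, G v w ↔ (w = σ v ∨ w = σ' v) := by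
  rw [mem_cycleFactors] at hσ
  have hex : ∀ v, ∃ w, w ≠ σ v ∧ ∀ x, G v x ↔ (x = σ v ∨ x = w) := by
    intro v
    obtain ⟨a, b, hab, hE⟩ := Finset.card_eq_two.1 (hreg v).1
    have hx : ∀ x, G v x ↔ (x = a ∨ x = b) := fun x => by
      simpa using Finset.ext_iff.1 hE x
    rcases (hx _).1 (hσ v) with h | h
    · exact ⟨b, by rw [h]; exact hab.symm, by rw [h]; exact hx⟩
    · exact ⟨a, by rw [h]; exact hab, fun x => by rw [h, hx, or_comm]⟩
  choose o ho1 ho2 using hex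
  have hinj : Function.Injective o := by
    intro u v huv
    by_contra hne
    -- `o u` would have the three in-neighbours `u`, `v` and `σ⁻¹ (o u)`.
    have hu : σ.symm (o u) ≠ u := fun h => ho1 u (by rw [← h, Equiv.apply_symm_apply, h])
    have hv : σ.symm (o u) ≠ v := fun h => ho1 v (by
      rw [← huv, ← h, Equiv.apply_symm_apply])
    have hsub : ({σ.symm (o u), u, v} : Finset V) ⊆ Finset.univ.filter fun w => G w (o u) := by
      intro x hx
      simp only [Finset.mem_insert, Finset.mem_singleton] at hx
      simp only [Finset.mem_filter, Finset.mem_univ, true_and]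
      rcases hx with rfl | rfl | rfl
      · simpa using hσ (σ.symm (o u))
      · exact (ho2 _ _).2 (Or.inr rfl)
      · exact (ho2 _ _).2 (Or.inr huv)
    have hc := Finset.card_le_card hsub
    rw [(hreg (o u)).2, Finset.card_eq_three.2 ⟨_, _, _, hu, hv, hne, rfl⟩] at hc
    omega
  exact ⟨Equiv.ofBijective o (Finite.injective_iff_bijective.1 hinj), ho1, ho2⟩

/-- Each edge lies in exactly half of the cycle-factors; this is the sum of that fact over all
loops. -/
theorem two_mul_sum_fix (hreg : IsRegularDigraph G 2) :
    2 * ∑ σ ∈ cycleFactors G, fixCount σ = loopCount G * (cycleFactors G).card := by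
  choose κ hκ1 hκ2 using fun (σ : Equiv.Perm V) (hσ : σ ∈ cycleFactors G) =>
    exists_complement hreg hσ
  have hmem : ∀ σ hσ, κ σ hσ ∈ cycleFactors G := fun σ hσ =>
    mem_cycleFactors.2 fun v => (hκ2 σ hσ v _).2 (Or.inr rfl)
  have hinv : ∀ σ hσ, κ (κ σ hσ) (hmem σ hσ) = σ := by
    intro σ hσ
    ext v
    exact ((hκ2 σ hσ v _).1 (mem_cycleFactors.1 (hmem _ (hmem σ hσ)) v)).resolve_right
      (hκ1 _ (hmem σ hσ) v)
  have hfix : ∀ σ hσ, fixCount σ + fixCount (κ σ hσ) = loopCount G := by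
    intro σ hσ
    unfold fixCount loopCount
    rw [← Finset.card_union_of_disjoint]
    · congr 1
      ext v
      simp only [Finset.mem_union, Finset.mem_filter, Finset.mem_univ, true_and]
      rw [hκ2 σ hσ v v, eq_comm, @eq_comm _ (κ σ hσ v)]
    · rw [Finset.disjoint_filter]
      intro v _ h1 h2
      exact hκ1 σ hσ v (h2.trans h1.symm)
  have hsum : ∑ σ ∈ (cycleFactors G).attach, fixCount (κ σ.1 σ.2)
      = ∑ σ ∈ (cycleFactors G).attach, fixCount σ.1 :=
    Finset.sum_bij' (fun σ _ => ⟨κ σ.1 σ.2, hmem _ _⟩) (fun σ _ => ⟨κ σ.1 σ.2, hmem _ _⟩)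
      (fun _ _ => Finset.mem_attach _ _) (fun _ _ => Finset.mem_attach _ _)
      (fun σ _ => Subtype.ext (hinv _ _)) (fun σ _ => Subtype.ext (hinv _ _)) (fun _ _ => rfl)
  rw [← Finset.sum_attach, two_mul]
  nth_rewrite 2 [← hsum]
  rw [← Finset.sum_add_distrib, Finset.sum_congr rfl fun σ _ => hfix σ.1 σ.2]
  simp [mul_comm]

theorem cycleFactors_nonempty (hreg : IsRegularDigraph G 2) : (cycleFactors G).Nonempty := by
  obtain ⟨f, hf, hG⟩ := (Fintype.all_card_le_filter_rel_iff_exists_injective G).1 (by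
    intro A
    -- Hall's condition: count the edges leaving `A` by their tails and by their heads.
    have := Finset.card_mul_le_card_mul G (s := A)
      (t := Finset.univ.filter fun b => ∃ a ∈ A, G a b) (m := 2) (n := 2) (by
        intro a ha
        rw [← (hreg a).1]
        apply Finset.card_le_card
        intro w hw
        simp only [Finset.mem_filter, Finset.mem_univ, true_and] at hw
        simp only [Finset.bipartiteAbove, Finset.mem_filter, Finset.mem_univ, true_and]
        exact ⟨⟨a, ha, hw⟩, hw⟩) (by
        intro b _
        rw [← (hreg b).2]
        apply Finset.card_le_card
        intro w hw
        simp only [Finset.bipartiteBelow, Finset.mem_filter] at hw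
        simpa using hw.2)
    omega)
  exact ⟨Equiv.ofBijective f (Finite.injective_iff_bijective.1 hf), mem_cycleFactors.2 hG⟩

end

theorem stmt_4 {V : Type*} [Fintype V] [DecidableEq V] (G : V → V → Prop) [DecidableRel G]
    (hreg : IsRegularDigraph G 2) (hn : 1 ≤ Fintype.card V) :
    (4 * ∑ σ ∈ cycleFactors G, cycleCount σ =
        3 * Fintype.card V * (cycleFactors G).card ↔
      ∃ τ : V → V, Function.Involutive τ ∧ (∀ v, τ v ≠ v) ∧
        ∀ u v, G u v ↔ (v = u ∨ v = τ u)) ∧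
    (4 * ∑ σ ∈ cycleFactors G, cycleCount σ =
        3 * Fintype.card V * (cycleFactors G).card → Even (Fintype.card V)) := by
  have hfwd : 4 * ∑ σ ∈ cycleFactors G, cycleCount σ =
        3 * Fintype.card V * (cycleFactors G).card →
      ∃ τ : Equiv.Perm V, (∀ v, τ (τ v) = v) ∧ (∀ v, τ v ≠ v) ∧
        ∀ u v, G u v ↔ (v = u ∨ v = τ u) := by
    intro heq
    have hpos := (cycleFactors_nonempty hreg).card_pos
    have hfix := two_mul_sum_fix hreg
    have hL : loopCount G ≤ Fintype.card V := Finset.card_le_univ _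
    have hle : ∀ σ ∈ cycleFactors G, 2 * cycleCount σ ≤ Fintype.card V + fixCount σ :=
      fun σ _ => two_mul_cycleCount_le σ
    have hsum := Finset.sum_le_sum hle
    have hexp : ∑ σ ∈ cycleFactors G, (Fintype.card V + fixCount σ) =
        Fintype.card V * (cycleFactors G).card + ∑ σ ∈ cycleFactors G, fixCount σ := by
      rw [Finset.sum_add_distrib, Finset.sum_const, smul_eq_mul, mul_comm]
    rw [← Finset.mul_sum, hexp] at hsum
    have hLn : loopCount G = Fintype.card V :=
      le_antisymm hL (Nat.le_of_mul_le_mul_right (by linarith) hpos)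
    have hinv : ∀ σ ∈ cycleFactors G, ∀ v, σ (σ v) = v := by
      have hall := (Finset.sum_eq_sum_iff_of_le hle).1 (by
        rw [← Finset.mul_sum, hexp]
        rw [hLn] at hfix
        linarith)
      exact fun σ hσ => (two_mul_cycleCount_eq_iff σ).1 (hall σ hσ)
    have hloop : ∀ v, G v v := by
      have := (Finset.card_eq_iff_eq_univ _).1 hLn
      intro v
      simpa using Finset.ext_iff.1 this v
    obtain ⟨τ, hτ1, hτ2⟩ := exists_complement hreg (σ := 1) (mem_cycleFactors.2 hloop)
    exact ⟨τ, hinv τ (mem_cycleFactors.2 fun v => (hτ2 v _).2 (Or.inr rfl)), hτ1, hτ2⟩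
  refine ⟨⟨fun h => ?_, ?_⟩, fun h => ?_⟩
  · obtain ⟨τ, h1, h2, h3⟩ := hfwd h
    exact ⟨τ, h1, h2, h3⟩
  · rintro ⟨τ, h1, h2, h3⟩
    have hLn : loopCount G = Fintype.card V := by
      unfold loopCount
      rw [Finset.filter_true_of_mem fun v _ => (h3 v v).2 (Or.inl rfl), Finset.card_univ]
    have hc : ∀ σ ∈ cycleFactors G, 2 * cycleCount σ = Fintype.card V + fixCount σ := by
      intro σ hσ
      rw [mem_cycleFactors] at hσ
      refine (two_mul_cycleCount_eq_iff σ).2 fun v => ?_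
      rcases (h3 _ _).1 (hσ v) with h | h
      · rw [h, h]
      · rcases (h3 _ _).1 (hσ (τ v)) with hτv | hτv
        -- `σ` cannot send both `v` and `τ v` to `τ v`.
        · exact absurd (σ.injective (hτv.trans h.symm)) (h2 v)
        · rw [h, hτv, h1]
    have hsum := Finset.sum_congr rfl hc
    rw [← Finset.mul_sum, Finset.sum_add_distrib, Finset.sum_const, smul_eq_mul] at hsum
    have hfix := two_mul_sum_fix hreg
    rw [hLn] at hfix
    linarith
  · obtain ⟨τ, h1, h2, -⟩ := hfwd h
    have hc := (two_mul_cycleCount_eq_iff τ).2 h1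
    have h0 : fixCount τ = 0 := by simp [fixCount, h2]
    exact ⟨cycleCount τ, by omega⟩
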